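/- Let V(x) = x²/2 + ℓx⁴/4 + f(x) be a C⁵ perturbed quartic potential with ℓ ∈ {−1,1} equal to the sign of V⁽⁴⁾(0). For every T > 0 there exist v₀ > 0 and C > 0 such that for all |v| < v₀, the solution x(v;·) of ẍ = −V'(x) with x(v;0) = 0, ẋ(v;0) = v and the solution x_ℓ(v;·) of ẍ = −x − ℓx³ with the same initial conditions both exist on [0,T] and satisfy max over t ∈ [0,T] of (|x(v;t) − x_ℓ(v;t)|, |ẋ(v;t) − ẋ_ℓ(v;t)|, |ẍ(v;t) − ẍ_ℓ(v;t)|) ≤ C v⁴. -/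

import Mathlib

open Real Filter Asymptotics Topology

/-- `V` is a C⁵ perturbed quartic potential `V(x) = x²/2 + ℓx⁴/4 + f(x)` with
`ℓ ∈ {-1,1}` (equal to the sign of `V⁽⁴⁾(0)`) and `|f⁽ⁱ⁾(x)| = O(|x|^{5-i})` as `x → 0`. -/
def PerturbedQuartic (V f : ℝ → ℝ) (l : ℝ) : Prop :=
  (l = 1 ∨ l = -1) ∧ ContDiff ℝ 5 f ∧
  (∀ x : ℝ, V x = x ^ 2 / 2 + l * x ^ 4 / 4 + f x) ∧
  (∀ i : ℕ, i ≤ 5 → (iteratedDeriv i f) =O[𝓝 0] fun x : ℝ => |x| ^ (5 - i))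

/-!
In the phase space of positions and velocities, Newton's equation is a first-order system, and the
`C²` distance of two motions is controlled by the distance of the phase curves together with that
of their derivatives. Both forces are `O(|z|)` at the equilibrium `0`, so a motion starting at `0`
with velocity `v` stays of size `O(|v|)` on `[0, T]`. Along it the two forces differ by only
`O(v⁴)`, and the reference force is Lipschitz near `0`, so Grönwall's inequality keeps the phase
curves `O(v⁴)`-close.
-/

section VectorField

variable {E : Type*} [NormedAddCommGroup E]

lemma isBigO_id_of_lipschitzOnWith {G : E → E} {K : NNReal} {s : Set E}
    (hG : LipschitzOnWith K G s) (hs : s ∈ 𝓝 0) (hG0 : G 0 = 0) :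
    G =O[𝓝 0] (id : E → E) := by
  refine IsBigO.of_bound K ?_
  filter_upwards [hs] with z hz
  simpa only [hG0, sub_zero, id] using hG.norm_sub_le hz (mem_of_mem_nhds hs)

lemma isBigO_norm_pow_id {n : ℕ} (hn : n ≠ 0) :
    (fun z : E => ‖z‖ ^ n) =O[𝓝 0] (id : E → E) := by
  refine IsBigO.of_bound 1 ?_
  filter_upwards [Metric.closedBall_mem_nhds (0 : E) one_pos] with z hz
  rw [norm_pow, norm_norm, one_mul]
  exact pow_le_of_le_one (norm_nonneg z) (mem_closedBall_zero_iff.1 hz) hn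

variable [NormedSpace ℝ E]

lemma hasDerivWithinAt_Ici_of_isIntegralCurveOn_Icc {γ : ℝ → E} {F : ℝ → E → E} {a b t : ℝ}
    (hγ : IsIntegralCurveOn γ F (Set.Icc a b)) (ht : t ∈ Set.Ico a b) :
    HasDerivWithinAt γ (F t (γ t)) (Set.Ici t) t :=
  (hγ t (Set.Ico_subset_Icc_self ht)).mono_of_mem_nhdsWithin (Icc_mem_nhdsGE_of_mem ht)

lemma norm_le_mul_exp_of_isIntegralCurveOn {γ : ℝ → E} {F : ℝ → E → E} {a b L r : ℝ} (hL : 0 ≤ L)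
    (hF : ∀ t z, ‖z‖ < r → ‖F t z‖ ≤ L * ‖z‖) (hγ : IsIntegralCurveOn γ F (Set.Icc a b))
    (hr : ‖γ a‖ * exp (L * (b - a)) < r) {t : ℝ} (ht : t ∈ Set.Icc a b) :
    ‖γ t‖ ≤ ‖γ a‖ * exp (L * (t - a)) := by
  have tendsto_bound (s : ℝ) : Tendsto (fun ε => gronwallBound ‖γ a‖ L ε (s - a)) (𝓝[>] 0)
      (𝓝 (‖γ a‖ * exp (L * (s - a)))) :=
    ((gronwallBound_continuous_ε ‖γ a‖ L (s - a)).tendsto' 0 _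
      (gronwallBound_ε0 _ _ _)).mono_left nhdsWithin_le_nhds
  refine ge_of_tendsto (tendsto_bound t) ?_
  filter_upwards [(tendsto_bound b).eventually_lt_const hr, self_mem_nhdsWithin]
    with ε hεr (hε : 0 < ε)
  -- The slack `ε` makes the comparison strict, so `F` need only be bounded where the curve
  -- touches the comparison function, and that function stays below `r`.
  refine image_norm_le_of_norm_deriv_right_lt_deriv_boundary hγ.continuousOn
    (fun s hs => hasDerivWithinAt_Ici_of_isIntegralCurveOn_Icc hγ hs)
    (by simp only [sub_self, gronwallBound_x0, le_refl])
    (fun s => hasDerivAt_gronwallBound_shift ‖γ a‖ L ε s a) (fun s hs hnorm => ?_) ht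
  have bound_le : gronwallBound ‖γ a‖ L ε (s - a) ≤ gronwallBound ‖γ a‖ L ε (b - a) :=
    gronwallBound_mono (norm_nonneg _) hε.le hL (sub_le_sub_right hs.2.le a)
  have norm_field_le := hF s (γ s) (by linarith)
  rw [hnorm] at norm_field_le
  linarith

lemma exists_norm_le_mul_norm_of_isBigO_id {F : E → E} (hF : F =O[𝓝 0] (id : E → E)) (T : ℝ) :
    ∃ c > 0, ∀ᶠ p in 𝓝 (0 : E), ∀ γ : ℝ → E,
      IsIntegralCurveOn γ (fun _ => F) (Set.Icc 0 T) → γ 0 = p →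
        ∀ t ∈ Set.Icc 0 T, ‖γ t‖ ≤ c * ‖p‖ := by
  obtain ⟨L, hL, hFL⟩ := hF.exists_pos
  obtain ⟨r, hr, hball⟩ := Metric.eventually_nhds_iff.1 hFL.bound
  have hsmall : ∀ᶠ p in 𝓝 (0 : E), ‖p‖ * exp (L * (T - 0)) < r :=
    (Continuous.tendsto' (by fun_prop) 0 0 (by simp)).eventually_lt_const hr
  refine ⟨exp (L * T), exp_pos _, hsmall.mono ?_⟩
  rintro p hp γ hγ rfl t ht
  calc ‖γ t‖ ≤ ‖γ 0‖ * exp (L * (t - 0)) :=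
        norm_le_mul_exp_of_isIntegralCurveOn hL.le
          (fun _ z hz => hball (by rwa [dist_zero_right])) hγ hp ht
    _ ≤ exp (L * T) * ‖γ 0‖ := by
        rw [sub_zero, mul_comm]
        gcongr
        exact ht.2

lemma gronwallBound_zero_eq_mul (K ε x : ℝ) :
    gronwallBound 0 K ε x = ε * gronwallBound 0 K 1 x := by
  unfold gronwallBound
  split_ifs <;> ring

lemma norm_sub_le_of_isIntegralCurveOn {F G : E → E} {K : NNReal} {s : Set E} {ε T : ℝ}
    {γ η : ℝ → E} (hG : LipschitzOnWith K G s)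
    (hγ : IsIntegralCurveOn γ (fun _ => F) (Set.Icc 0 T))
    (hη : IsIntegralCurveOn η (fun _ => G) (Set.Icc 0 T))
    (hγs : ∀ t ∈ Set.Icc 0 T, γ t ∈ s) (hηs : ∀ t ∈ Set.Icc 0 T, η t ∈ s)
    (hFG : ∀ t ∈ Set.Icc 0 T, ‖F (γ t) - G (γ t)‖ ≤ ε) (h0 : γ 0 = η 0)
    {t : ℝ} (ht : t ∈ Set.Icc 0 T) :
    ‖γ t - η t‖ ≤ ε * gronwallBound 0 K 1 T ∧
      ‖F (γ t) - G (η t)‖ ≤ ε * (1 + K * gronwallBound 0 K 1 T) := by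
  have hIco : Set.Ico 0 T ⊆ Set.Icc 0 T := Set.Ico_subset_Icc_self
  have hε : 0 ≤ ε := (norm_nonneg _).trans (hFG t ht)
  have hγη : ‖γ t - η t‖ ≤ ε * gronwallBound 0 K 1 T :=
    calc ‖γ t - η t‖ = dist (γ t) (η t) := (dist_eq_norm _ _).symm
      _ ≤ gronwallBound 0 K (ε + 0) (t - 0) :=
          dist_le_of_approx_trajectories_ODE_of_mem (v := fun _ => G) (s := fun _ => s)
            (fun _ _ => hG) hγ.continuousOn
            (fun τ hτ => hasDerivWithinAt_Ici_of_isIntegralCurveOn_Icc hγ hτ)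
            (fun τ hτ => (dist_eq_norm _ _).trans_le (hFG τ (hIco hτ)))
            (fun τ hτ => hγs τ (hIco hτ)) hη.continuousOn
            (fun τ hτ => hasDerivWithinAt_Ici_of_isIntegralCurveOn_Icc hη hτ)
            (fun _ _ => (dist_self _).le) (fun τ hτ => hηs τ (hIco hτ))
            (dist_le_zero.2 h0) t ht
      _ = ε * gronwallBound 0 K 1 t := by rw [add_zero, sub_zero, gronwallBound_zero_eq_mul]
      _ ≤ ε * gronwallBound 0 K 1 T :=
          mul_le_mul_of_nonneg_left
            (gronwallBound_mono le_rfl zero_le_one K.coe_nonneg ht.2) hε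
  refine ⟨hγη, ?_⟩
  calc ‖F (γ t) - G (η t)‖ ≤ ‖F (γ t) - G (γ t)‖ + ‖G (γ t) - G (η t)‖ :=
        norm_sub_le_norm_sub_add_norm_sub _ _ _
    _ ≤ ε + K * (ε * gronwallBound 0 K 1 T) :=
        add_le_add (hFG t ht) <| (hG.norm_sub_le (hγs t ht) (hηs t ht)).trans <|
          mul_le_mul_of_nonneg_left hγη K.coe_nonneg
    _ = ε * (1 + K * gronwallBound 0 K 1 T) := by ring

theorem exists_norm_sub_le_of_isBigO_norm_pow {F G : E → E} {K : NNReal} {s : Set E} {n : ℕ}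
    (hG : LipschitzOnWith K G s) (hs : s ∈ 𝓝 0) (hG0 : G 0 = 0) (hn : n ≠ 0)
    (hFG : (fun z => F z - G z) =O[𝓝 0] fun z => ‖z‖ ^ n) (T : ℝ) :
    ∃ C > 0, ∀ᶠ p in 𝓝 (0 : E), ∀ γ η : ℝ → E,
      IsIntegralCurveOn γ (fun _ => F) (Set.Icc 0 T) →
      IsIntegralCurveOn η (fun _ => G) (Set.Icc 0 T) → γ 0 = p → η 0 = p →
        ∀ t ∈ Set.Icc 0 T,
          ‖γ t - η t‖ ≤ C * ‖p‖ ^ n ∧ ‖F (γ t) - G (η t)‖ ≤ C * ‖p‖ ^ n := by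
  have hGO : G =O[𝓝 0] (id : E → E) := isBigO_id_of_lipschitzOnWith hG hs hG0
  have hFO : F =O[𝓝 0] (id : E → E) := by
    simpa only [sub_add_cancel] using (hFG.trans (isBigO_norm_pow_id hn)).add hGO
  obtain ⟨c, hc, hγ_le⟩ := exists_norm_le_mul_norm_of_isBigO_id hFO T
  obtain ⟨d, -, hη_le⟩ := exists_norm_le_mul_norm_of_isBigO_id hGO T
  obtain ⟨A, hA, hFGA⟩ := hFG.exists_pos
  obtain ⟨r, hr, hball⟩ := Metric.eventually_nhds_iff.1 (hFGA.bound.and hs)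
  simp only [dist_zero_right, norm_pow, norm_norm] at hball
  have hsmall (k : ℝ) : ∀ᶠ p in 𝓝 (0 : E), k * ‖p‖ < r :=
    (Continuous.tendsto' (by fun_prop) 0 0 (by simp)).eventually_lt_const hr
  set B := gronwallBound 0 K 1 T
  refine ⟨A * c ^ n * max 1 (max B (1 + K * B)), by positivity, ?_⟩
  filter_upwards [hγ_le, hη_le, hsmall c, hsmall d] with p hγp hηp hcp hdp γ η hγ hη hγ0 hη0 t ht
  have hγr (τ) (hτ : τ ∈ Set.Icc 0 T) : ‖γ τ‖ < r := (hγp γ hγ hγ0 τ hτ).trans_lt hcp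
  have hηr (τ) (hτ : τ ∈ Set.Icc 0 T) : ‖η τ‖ < r := (hηp η hη hη0 τ hτ).trans_lt hdp
  have hFGγ (τ) (hτ : τ ∈ Set.Icc 0 T) : ‖F (γ τ) - G (γ τ)‖ ≤ A * (c * ‖p‖) ^ n :=
    (hball (hγr τ hτ)).1.trans (by gcongr; exact hγp γ hγ hγ0 τ hτ)
  obtain ⟨hcurve, hfield⟩ := norm_sub_le_of_isIntegralCurveOn hG hγ hη
    (fun τ hτ => (hball (hγr τ hτ)).2) (fun τ hτ => (hball (hηr τ hτ)).2) hFGγ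
    (hγ0.trans hη0.symm) ht
  have hconst : A * c ^ n * max 1 (max B (1 + K * B)) * ‖p‖ ^ n =
      A * (c * ‖p‖) ^ n * max 1 (max B (1 + K * B)) := by ring
  rw [hconst]
  exact ⟨hcurve.trans (by gcongr; exact le_max_of_le_right (le_max_left _ _)),
    hfield.trans (by gcongr; exact le_max_of_le_right (le_max_right _ _))⟩

end VectorField

section NewtonianMotion

variable {E : Type*} [NormedAddCommGroup E]

/-- The vector field `(q, p) ↦ (p, g q)` on phase space, whose integral curves are the curves
`(x, ẋ)` with `ẍ = g(x)`. -/
def newtonField (g : E → E) (z : E × E) : E × E := (z.2, g z.1)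

lemma lipschitzOnWith_newtonField {g : E → E} {K : NNReal} {s : Set E}
    (hg : LipschitzOnWith K g s) :
    LipschitzOnWith (max 1 K) (newtonField g) (s ×ˢ Set.univ) := by
  have hforce : LipschitzOnWith (K * 1) (g ∘ Prod.fst) (s ×ˢ (Set.univ : Set E)) :=
    hg.comp LipschitzWith.prod_fst.lipschitzOnWith fun z hz => hz.1
  rw [mul_one] at hforce
  exact LipschitzWith.prod_snd.lipschitzOnWith.prodMk hforce

lemma isBigO_newtonField_sub {g h : E → E} {n : ℕ}
    (hgh : (fun q => g q - h q) =O[𝓝 0] fun q => ‖q‖ ^ n) :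
    (fun z => newtonField g z - newtonField h z) =O[𝓝 0] fun z : E × E => ‖z‖ ^ n := by
  have hfst : Tendsto (Prod.fst : E × E → E) (𝓝 0) (𝓝 0) := continuous_fst.tendsto 0
  have hpow : (fun z : E × E => ‖z.1‖ ^ n) =O[𝓝 0] fun z => ‖z‖ ^ n :=
    (isBigO_fst_prod' (f' := (id : E × E → E × E))).norm_norm.pow n
  exact ((isBigO_zero _ _).prod_left ((hgh.comp_tendsto hfst).trans hpow)).congr_left fun z => by
    simp only [newtonField, Function.comp_apply, Prod.mk_sub_mk, sub_self]

variable [NormedSpace ℝ E]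

/-- `x` solves Newton's equation `ẍ = g(x)` at the times in `s`. Derivatives are two-sided, so at
an endpoint of `s` the motion is differentiable across it and `deriv x` is its velocity. -/
structure IsNewtonianMotionOn (g : E → E) (x : ℝ → E) (s : Set ℝ) : Prop where
  hasDerivAt : ∀ t ∈ s, HasDerivAt x (deriv x t) t
  hasDerivAt_deriv : ∀ t ∈ s, HasDerivAt (deriv x) (g (x t)) t

lemma IsNewtonianMotionOn.of_contDiff_two {g : E → E} {x : ℝ → E} (hx : ContDiff ℝ 2 x)
    (hxg : ∀ t, deriv (deriv x) t = g (x t)) (s : Set ℝ) : IsNewtonianMotionOn g x s where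
  hasDerivAt t _ := (hx.differentiable two_ne_zero t).hasDerivAt
  hasDerivAt_deriv t _ := hxg t ▸ (hx.differentiable_deriv_two t).hasDerivAt

lemma IsNewtonianMotionOn.isIntegralCurveOn {g : E → E} {x : ℝ → E} {s : Set ℝ}
    (hx : IsNewtonianMotionOn g x s) :
    IsIntegralCurveOn (fun t => (x t, deriv x t)) (fun _ => newtonField g) s :=
  fun t ht => ((hx.hasDerivAt t ht).prodMk (hx.hasDerivAt_deriv t ht)).hasDerivWithinAt

theorem exists_norm_sub_le_of_isNewtonianMotionOn {g h : E → E} {K : NNReal} {s : Set E} {n : ℕ}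
    (hh : LipschitzOnWith K h s) (hs : s ∈ 𝓝 0) (hh0 : h 0 = 0) (hn : n ≠ 0)
    (hgh : (fun q => g q - h q) =O[𝓝 0] fun q => ‖q‖ ^ n) (T : ℝ) :
    ∃ C > 0, ∀ᶠ p in 𝓝 (0 : E × E), ∀ x y : ℝ → E,
      IsNewtonianMotionOn g x (Set.Icc 0 T) → IsNewtonianMotionOn h y (Set.Icc 0 T) →
      (x 0, deriv x 0) = p → (y 0, deriv y 0) = p → ∀ t ∈ Set.Icc 0 T,
        ‖x t - y t‖ ≤ C * ‖p‖ ^ n ∧ ‖deriv x t - deriv y t‖ ≤ C * ‖p‖ ^ n ∧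
        ‖deriv (deriv x) t - deriv (deriv y) t‖ ≤ C * ‖p‖ ^ n := by
  obtain ⟨C, hC, hclose⟩ := exists_norm_sub_le_of_isBigO_norm_pow
    (lipschitzOnWith_newtonField hh) (prod_mem_nhds hs univ_mem)
    (by simp only [newtonField, Prod.fst_zero, Prod.snd_zero, hh0, Prod.mk_zero_zero])
    hn (isBigO_newtonField_sub hgh) T
  refine ⟨C, hC, hclose.mono fun p hp x y hx hy hx0 hy0 t ht => ?_⟩
  obtain ⟨hphase, hvel⟩ := hp _ _ hx.isIntegralCurveOn hy.isIntegralCurveOn hx0 hy0 t ht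
  rw [(hx.hasDerivAt_deriv t ht).deriv, (hy.hasDerivAt_deriv t ht).deriv]
  exact ⟨(norm_fst_le _).trans hphase, (norm_snd_le _).trans hphase, (norm_snd_le _).trans hvel⟩

end NewtonianMotion

section PerturbedQuartic

variable {V f : ℝ → ℝ} {l : ℝ}

lemma deriv_perturbed_quartic (hV : ∀ z, V z = z ^ 2 / 2 + l * z ^ 4 / 4 + f z)
    (hf : Differentiable ℝ f) (z : ℝ) : deriv V z = z + l * z ^ 3 + deriv f z := by
  have hVz := ((((hasDerivAt_pow 2 z).div_const 2).add
    (((hasDerivAt_pow 4 z).const_mul l).div_const 4)).add (hf z).hasDerivAt).congr_of_eventuallyEq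
    (Eventually.of_forall hV)
  rw [hVz.deriv]
  norm_num
  ring

theorem statement11_general (hV : ∀ z, V z = z ^ 2 / 2 + l * z ^ 4 / 4 + f z)
    (hf : Differentiable ℝ f) (hf' : deriv f =O[𝓝 0] fun z => |z| ^ 4) (T : ℝ) :
    ∃ v₀ > 0, ∃ C > 0, ∀ v : ℝ, |v| < v₀ → ∀ x xl : ℝ → ℝ,
      IsNewtonianMotionOn (fun z => -deriv V z) x (Set.Icc 0 T) → x 0 = 0 → deriv x 0 = v →
      IsNewtonianMotionOn (fun z => -(z + l * z ^ 3)) xl (Set.Icc 0 T) → xl 0 = 0 →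
      deriv xl 0 = v → ∀ t ∈ Set.Icc 0 T,
        |x t - xl t| ≤ C * v ^ 4 ∧ |deriv x t - deriv xl t| ≤ C * v ^ 4 ∧
        |deriv (deriv x) t - deriv (deriv xl) t| ≤ C * v ^ 4 := by
  obtain ⟨K, s, hs, hlip⟩ : ∃ K, ∃ s ∈ 𝓝 (0 : ℝ),
      LipschitzOnWith K (fun z => -(z + l * z ^ 3)) s :=
    ContDiffAt.exists_lipschitzOnWith (𝕂 := ℝ) (by fun_prop)
  have hforce : (fun z => -deriv V z - -(z + l * z ^ 3)) =O[𝓝 0] fun z => ‖z‖ ^ 4 :=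
    hf'.neg_left.congr_left fun z => by rw [deriv_perturbed_quartic hV hf]; ring
  obtain ⟨C, hC, hclose⟩ :=
    exists_norm_sub_le_of_isNewtonianMotionOn hlip hs (by norm_num) four_ne_zero hforce T
  have hinit : Tendsto (fun v : ℝ => ((0 : ℝ), v)) (𝓝 0) (𝓝 0) :=
    Continuous.tendsto' (by fun_prop) 0 0 rfl
  obtain ⟨v₀, hv₀, hball⟩ := Metric.eventually_nhds_iff.1 (hinit.eventually hclose)
  refine ⟨v₀, hv₀, C, hC, fun v hv x xl hx hx0 hxv hxl hxl0 hxlv t ht => ?_⟩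
  have hnorm : ‖((0 : ℝ), v)‖ ^ 4 = v ^ 4 := by
    rw [Prod.norm_mk, norm_zero, max_eq_right (norm_nonneg v), Real.norm_eq_abs,
      Even.pow_abs (by decide)]
  rw [← hnorm]
  exact hball (by rwa [dist_zero_right]) x xl hx hxl (Prod.ext hx0 hxv) (Prod.ext hxl0 hxlv) t ht

end PerturbedQuartic

/-- the solutions of `ẍ = -V'(x)` and of `ẍ = -x - ℓx³` with the
same initial conditions `x(0) = 0`, `ẋ(0) = v` stay `Cv⁴`-close in C²-norm on
any fixed time interval `[0,T]`, for `v` small. -/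
theorem statement11 (V f : ℝ → ℝ) (l : ℝ) (hV : PerturbedQuartic V f l)
    (v₁ : ℝ) (hv₁ : 0 < v₁) (x xl : ℝ → ℝ → ℝ)
    -- `x v` solves `ẍ = -V'(x)` with `x(0) = 0`, `ẋ(0) = v`:
    (hx : ∀ v : ℝ, |v| ≤ v₁ → ContDiff ℝ 2 (x v) ∧ x v 0 = 0 ∧ deriv (x v) 0 = v ∧
      ∀ t : ℝ, deriv (deriv (x v)) t = -(deriv V (x v t)))
    -- `xl v` solves `ẍ = -x - ℓx³` with the same initial conditions:
    (hxl : ∀ v : ℝ, |v| ≤ v₁ → ContDiff ℝ 2 (xl v) ∧ xl v 0 = 0 ∧ deriv (xl v) 0 = v ∧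
      ∀ t : ℝ, deriv (deriv (xl v)) t = -(xl v t + l * (xl v t) ^ 3)) :
    ∀ T : ℝ, 0 < T → ∃ v₀ > (0 : ℝ), v₀ ≤ v₁ ∧ ∃ C > (0 : ℝ),
      ∀ v : ℝ, |v| < v₀ → ∀ t ∈ Set.Icc (0 : ℝ) T,
        |x v t - xl v t| ≤ C * v ^ 4 ∧
        |deriv (x v) t - deriv (xl v) t| ≤ C * v ^ 4 ∧
        |deriv (deriv (x v)) t - deriv (deriv (xl v)) t| ≤ C * v ^ 4 := by
  obtain ⟨-, hf, hVf, hO⟩ := hV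
  intro T _
  obtain ⟨v₀, hv₀, C, hC, hclose⟩ := statement11_general hVf (hf.differentiable (by norm_num))
    (iteratedDeriv_one (f := f) ▸ hO 1 (by norm_num)) T
  refine ⟨min v₀ v₁, lt_min hv₀ hv₁, min_le_right _ _, C, hC, fun v hv => ?_⟩
  obtain ⟨hx2, hx0, hxv, hxV⟩ := hx v (hv.le.trans (min_le_right _ _))
  obtain ⟨hxl2, hxl0, hxlv, hxlV⟩ := hxl v (hv.le.trans (min_le_right _ _))
  exact hclose v (hv.trans_le (min_le_left _ _)) (x v) (xl v) (.of_contDiff_two hx2 hxV _) hx0 hxv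
    (.of_contDiff_two hxl2 hxlV _) hxl0 hxlv
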